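/- Let Γ be a countable directed graph which is cofinal, row-finite and has no sinks, let F be a potential and β ∈ ℝ, and assume Σ_{n=0}^∞ A(β)^n_{v,w} < ∞ for all v, w ∈ Γ_V. Then there exists an e^{βF}-conformal measure on P(Γ) if and only if Wan(Γ) ≠ ∅. -/

import Mathlib

/-!
If `m` is conformal, the mass of the paths from `v` that are at `w` at time `n` is at most
`A(β)ⁿ_{v,w} m(Z(w))`. Transience makes this summable in `n`, so by Borel–Cantelli almost every
path visits each vertex finitely often, that is, is wandering (`exists_wandering`).

Conversely let `p` be a wandering path with vertices `w₀, w₁, …`, and let `G` be the Green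
function. The vertices `v` for which `G(v, wₖ) / G(w₀, wₖ)` is eventually bounded in `k` form a
nonempty hereditary saturated set, hence are all the vertices. Since
`G(v, w) = δ_{v,w} + ∑_{s(a) = v} e^{-βF(a)} G(r(a), w)` is a finite sum and `wₖ` leaves every
finite set, a limit of these quotients along a free ultrafilter is a finite vector `ψ` with
`A(β) ψ = ψ` and `ψ(w₀) = 1` (`exists_harmonic`).

From `ψ` one gets a Markov chain with transition probabilities `e^{-βF(a)} ψ(r(a)) / ψ(s(a))`.
It is realised by choosing, independently for every time and every vertex `v`, an arrow leaving
`v`, and following the chosen arrows; thus every sample is a genuine path. With `P_v` the law of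
the path from `v`, the measure `∑ ψ(v) P_v` is conformal: splitting off the choices made at
time `0` leaves an independent sequence of choices of the same law (`exists_conformal`).
-/

open MeasureTheory Filter Topology
open scoped ENNReal NNReal

namespace GraphKMS

variable {V A : Type}

/-- The space `P(Γ)` of infinite paths of a directed graph with vertex set `V`,
arrow set `A`, source map `s` and range map `r`. -/
structure PathSpace (s r : A → V) : Type where
  seq : ℕ → A
  compat : ∀ i, r (seq i) = s (seq (i + 1))

/-- The Borel σ-algebra of `P(Γ)`, i.e. the trace on `P(Γ)` of the Borel σ-algebra of the
product `A^ℕ` with `A` discrete. -/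
instance (s r : A → V) : MeasurableSpace (PathSpace s r) :=
  MeasurableSpace.comap (fun p => p.seq) (@MeasurableSpace.pi ℕ (fun _ => A) (fun _ => ⊤))

/-- The shift map `σ`. -/
def shift (s r : A → V) (p : PathSpace s r) : PathSpace s r :=
  ⟨fun i => p.seq (i + 1), fun i => p.compat (i + 1)⟩

/-- The cylinder set `Z(v)` of a vertex. -/
def cylV (s r : A → V) (v : V) : Set (PathSpace s r) := {p | s (p.seq 0) = v}

/-- The cylinder set `Z(a)` of an arrow. -/
def cylA (s r : A → V) (a : A) : Set (PathSpace s r) := {p | p.seq 0 = a}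

/-- A finite path: a source vertex together with a compatible list of arrows.
The empty list corresponds to the path of length `0` given by the vertex `src`. -/
structure FinPath (s r : A → V) : Type where
  src : V
  arrows : List A
  head_src : ∀ h : arrows ≠ [], s (arrows.head h) = src
  chain : arrows.Chain' (fun a b => r a = s b)

/-- The range `r(μ)` of a finite path. -/
def finRng (s r : A → V) (μ : FinPath s r) : V :=
  match μ.arrows.getLast? with
  | none => μ.src
  | some a => r a

/-- The additive extension `F(μ)` of a potential to finite paths. -/
def finWt (s r : A → V) (F : A → ℝ) (μ : FinPath s r) : ℝ := (μ.arrows.map F).sum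

/-- The cylinder set `Z(μ)` of a finite path. -/
def finCyl (s r : A → V) (μ : FinPath s r) : Set (PathSpace s r) :=
  {p | s (p.seq 0) = μ.src ∧ ∀ i : Fin μ.arrows.length, p.seq i.1 = μ.arrows.get i}

/-- The set of vertices occurring in a finite path. -/
def finVerts (s r : A → V) (μ : FinPath s r) : Set V :=
  {μ.src} ∪ {v | ∃ a ∈ μ.arrows, s a = v ∨ r a = v}

/-- The entries of the matrix `A(β)`. -/
noncomputable def Amat (s r : A → V) (F : A → ℝ) (β : ℝ) (v w : V) : ℝ≥0∞ :=
  ∑' a : {a : A // s a = v ∧ r a = w}, ENNReal.ofReal (Real.exp (-(β * F a.1)))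

/-- Powers of a `[0,∞]`-valued matrix. -/
noncomputable def matPow (M : V → V → ℝ≥0∞) : ℕ → V → V → ℝ≥0∞
  | 0 => fun v w => ({v} : Set V).indicator (fun _ => (1 : ℝ≥0∞)) w
  | n + 1 => fun v w => ∑' u : V, M v u * matPow M n u w

/-- The entries of `A(β)ⁿ`. -/
noncomputable def Apow (s r : A → V) (F : A → ℝ) (β : ℝ) (n : ℕ) (v w : V) : ℝ≥0∞ :=
  matPow (Amat s r F β) n v w

/-- The Green function `Σₙ A(β)ⁿ_{v,w}`. -/
noncomputable def Green (s r : A → V) (F : A → ℝ) (β : ℝ) (v w : V) : ℝ≥0∞ :=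
  ∑' n : ℕ, Apow s r F β n v w

/-- The Martin kernel `K_β(v,w)` with base point `v₀`. -/
noncomputable def MartinK (s r : A → V) (F : A → ℝ) (β : ℝ) (v₀ v w : V) : ℝ≥0∞ :=
  Green s r F β v w / Green s r F β v₀ w

/-- A harmonic vector for a `[0,∞]`-valued matrix: a nonzero, finite-valued,
nonnegative vector fixed by the matrix. -/
def IsHarmonic (M : V → V → ℝ≥0∞) (ψ : V → ℝ≥0∞) : Prop :=
  ψ ≠ 0 ∧ (∀ v, ψ v ≠ ∞) ∧ ∀ v, (∑' w : V, M v w * ψ w) = ψ v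

/-- A minimal harmonic vector. -/
def IsMinimalHarmonic (M : V → V → ℝ≥0∞) (ψ : V → ℝ≥0∞) : Prop :=
  IsHarmonic M ψ ∧ ∀ φ : V → ℝ≥0∞, IsHarmonic M φ → (∀ v, φ v ≤ ψ v) →
    ∃ c : ℝ≥0, 0 < c ∧ ∀ v, φ v = (c : ℝ≥0∞) * ψ v

/-- An `e^{βF}`-conformal measure: a nonzero Borel measure which is finite on the
cylinders of vertices and satisfies `m(σ(B ∩ Z(a))) = e^{βF(a)} m(B ∩ Z(a))`. -/
def Conformal (s r : A → V) (F : A → ℝ) (β : ℝ) (m : Measure (PathSpace s r)) : Prop :=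
  m ≠ 0 ∧ (∀ v : V, m (cylV s r v) ≠ ∞) ∧
    ∀ (a : A) (B : Set (PathSpace s r)), MeasurableSet B →
      m (shift s r '' (B ∩ cylA s r a)) =
        ENNReal.ofReal (Real.exp (β * F a)) * m (B ∩ cylA s r a)

/-- An extremal conformal measure: every conformal measure dominated by it is a
positive scalar multiple of it. -/
def ExtremalConformal (s r : A → V) (F : A → ℝ) (β : ℝ) (m : Measure (PathSpace s r)) : Prop :=
  Conformal s r F β m ∧ ∀ m' : Measure (PathSpace s r), Conformal s r F β m' →
    (∀ B : Set (PathSpace s r), MeasurableSet B → m' B ≤ m B) →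
    ∃ c : ℝ≥0, 0 < c ∧ m' = (c : ℝ≥0∞) • m

/-- A wandering path: its vertices leave every finite set of vertices. -/
def Wandering (s r : A → V) (p : PathSpace s r) : Prop :=
  ∀ F₀ : Finset V, ∃ N : ℕ, ∀ i, N ≤ i → s (p.seq i) ∉ F₀

/-- A ray: an infinite path with pairwise distinct vertices. -/
def IsRay (s r : A → V) (p : PathSpace s r) : Prop :=
  Function.Injective fun i => s (p.seq i)

/-- The relation `p → q` between (wandering) paths. -/
def Leads (s r : A → V) (p q : PathSpace s r) : Prop :=
  ∀ (F₀ : Finset V) (N : ℕ), ∃ n₁ n₂ : ℕ, N ≤ n₁ ∧ N ≤ n₂ ∧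
    ∃ μ : FinPath s r, μ.src = s (p.seq n₁) ∧ finRng s r μ = s (q.seq n₂) ∧
      ∀ v ∈ finVerts s r μ, v ∉ F₀

/-- Nonempty path lists from `v` to `w`. -/
def IsPathList (s r : A → V) (l : List A) (v w : V) : Prop :=
  l ≠ [] ∧ l.Chain' (fun a b => r a = s b) ∧
    (∀ h : l ≠ [], s (l.head h) = v) ∧ ∀ h : l ≠ [], r (l.getLast h) = w

/-- The set `L_j(y)` (zero-indexed in `j`). -/
def Lset (s r : A → V) (p : PathSpace s r) (j : ℕ) : Set (List A) :=
  {l | IsPathList s r l (s (p.seq j)) (s (p.seq (j + 1))) ∧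
    ∀ a ∈ l, ∀ i ≤ j, r a ≠ s (p.seq i)}

/-- The sum `Σ_{μ ∈ L_j(y)} e^{-βF(μ)}`. -/
noncomputable def LSum (s r : A → V) (F : A → ℝ) (β : ℝ) (p : PathSpace s r) (j : ℕ) : ℝ≥0∞ :=
  ∑' l : Lset s r p j, ENNReal.ofReal (Real.exp (-(β * (l.1.map F).sum)))

/-- The product `𝕎(y[1,k+1[)` (zero-indexed: the product of the first `k` level sums). -/
noncomputable def Wprod (s r : A → V) (F : A → ℝ) (β : ℝ) (p : PathSpace s r) (k : ℕ) : ℝ≥0∞ :=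
  ∏ j ∈ Finset.range k, LSum s r F β p j

/-- `𝕍_β(v,y)`: the limit of the nondecreasing sequence of quotients. -/
noncomputable def Vbeta (s r : A → V) (F : A → ℝ) (β : ℝ) (v : V) (p : PathSpace s r) : ℝ≥0∞ :=
  Filter.limsup (fun k => Green s r F β v (s (p.seq k)) / Wprod s r F β p k) Filter.atTop

/-- `B_k(y)` (zero-indexed in `k`). -/
def Bset (s r : A → V) (p : PathSpace s r) (k : ℕ) : Set (PathSpace s r) :=
  {x | s (x.seq 0) = s (p.seq k) ∧ ∀ i, 1 ≤ i → ∀ j ≤ k, s (x.seq i) ≠ s (p.seq j)}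

/-- `𝔹_k(y)` (zero-indexed in `k`). -/
def BBset (s r : A → V) (p : PathSpace s r) (k : ℕ) : Set (PathSpace s r) :=
  Bset s r p k ∩ ⋂ (j : ℕ) (_ : k + 1 ≤ j), ⋃ i : ℕ, (shift s r)^[i] ⁻¹' Bset s r p j

/-- `𝔹(y)`. -/
def BB (s r : A → V) (p : PathSpace s r) : Set (PathSpace s r) :=
  ⋃ (n : ℕ) (k : ℕ), (shift s r)^[n] ⁻¹' ((shift s r)^[k] '' BBset s r p 0)

/-- A simple path from `v` to `w`: no arrow except possibly the last one has range `w`. -/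
def IsSimplePath (s r : A → V) (v w : V) (l : List A) : Prop :=
  IsPathList s r l v w ∧ ∀ a ∈ l.dropLast, r a ≠ w

/-- `R_{βF}(v,w)`: the sum of `e^{-βF(ν)}` over all simple paths `ν` from `v` to `w`. -/
noncomputable def Rsum (s r : A → V) (F : A → ℝ) (β : ℝ) (v w : V) : ℝ≥0∞ :=
  ∑' l : {l : List A // IsSimplePath s r v w l},
    ENNReal.ofReal (Real.exp (-(β * (l.1.map F).sum)))

open Classical in
/-- The restriction of a matrix to a subset of the index set (extended by `0`). -/
noncomputable def restrMat (M : V → V → ℝ≥0∞) (S : Set V) (v w : V) : ℝ≥0∞ :=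
  if v ∈ S ∧ w ∈ S then M v w else 0

/-- A loop: a nonempty path list whose range equals its source. -/
def IsLoop (s r : A → V) (l : List A) : Prop :=
  l ≠ [] ∧ l.Chain' (fun a b => r a = s b) ∧
    ∀ h : l ≠ [], r (l.getLast h) = s (l.head h)

/-! ### Weights and the Green function -/

/-- The Boltzmann weight `e^{-βF(a)}` of an arrow. -/
noncomputable def wt (F : A → ℝ) (β : ℝ) (a : A) : ℝ≥0∞ :=
  ENNReal.ofReal (Real.exp (-(β * F a)))

lemma wt_ne_zero (F : A → ℝ) (β : ℝ) (a : A) : wt F β a ≠ 0 := by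
  simp [wt, Real.exp_pos]

lemma wt_ne_top (F : A → ℝ) (β : ℝ) (a : A) : wt F β a ≠ ∞ := ENNReal.ofReal_ne_top

lemma exp_mul_wt (F : A → ℝ) (β : ℝ) (a : A) :
    ENNReal.ofReal (Real.exp (β * F a)) * wt F β a = 1 := by
  rw [wt, ← ENNReal.ofReal_mul (Real.exp_pos _).le, ← Real.exp_add]
  simp

/-- The action of `A(β)` on a vector, written as a sum over the arrows leaving `v`. -/
lemma tsum_Amat_mul (s r : A → V) (F : A → ℝ) (β : ℝ) (v : V) (g : V → ℝ≥0∞) :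
    ∑' u, Amat s r F β v u * g u = ∑' a : {a // s a = v}, wt F β a.1 * g (r a.1) := by
  rw [← (Equiv.sigmaFiberEquiv (fun a : {a // s a = v} => r a.1)).tsum_eq, ENNReal.tsum_sigma']
  congr 1
  ext u
  rw [Amat, ← ENNReal.tsum_mul_right,
    ← (Equiv.subtypeSubtypeEquivSubtypeInter (fun a => s a = v) (fun a => r a = u)).tsum_eq]
  congr 1
  ext ⟨⟨a, ha⟩, hu⟩
  simp only at hu
  subst hu
  rfl

lemma Apow_succ (s r : A → V) (F : A → ℝ) (β : ℝ) (n : ℕ) (v w : V) :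
    Apow s r F β (n + 1) v w =
      ∑' a : {a // s a = v}, wt F β a.1 * Apow s r F β n (r a.1) w :=
  tsum_Amat_mul s r F β v (fun u => Apow s r F β n u w)

lemma Green_eq (s r : A → V) (F : A → ℝ) (β : ℝ) (v w : V) :
    Green s r F β v w = Apow s r F β 0 v w +
      ∑' a : {a // s a = v}, wt F β a.1 * Green s r F β (r a.1) w := by
  rw [Green, tsum_eq_zero_add' ENNReal.summable]
  simp_rw [Apow_succ]
  rw [ENNReal.tsum_comm]
  simp_rw [ENNReal.tsum_mul_left]
  rfl

lemma Green_eq_of_ne (s r : A → V) (F : A → ℝ) (β : ℝ) {v w : V} (h : w ≠ v) :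
    Green s r F β v w = ∑' a : {a // s a = v}, wt F β a.1 * Green s r F β (r a.1) w := by
  rw [Green_eq]
  simp [Apow, matPow, h]

lemma wt_mul_Green_le (s r : A → V) (F : A → ℝ) (β : ℝ) (a : A) (w : V) :
    wt F β a * Green s r F β (r a) w ≤ Green s r F β (s a) w := by
  rw [Green_eq s r F β (s a) w]
  exact le_add_left (ENNReal.le_tsum (f := fun b : {b // s b = s a} =>
    wt F β b.1 * Green s r F β (r b.1) w) ⟨a, rfl⟩)

lemma Green_self_ne_zero (s r : A → V) (F : A → ℝ) (β : ℝ) (v : V) :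
    Green s r F β v v ≠ 0 := by
  rw [Green_eq]
  simp [Apow, matPow]

lemma Green_path_ne_zero (s r : A → V) (F : A → ℝ) (β : ℝ) (p : PathSpace s r) (k : ℕ) :
    ∀ i, Green s r F β (s (p.seq i)) (s (p.seq (i + k))) ≠ 0 := by
  induction k with
  | zero => intro i; exact Green_self_ne_zero s r F β _
  | succ k ih =>
    intro i h
    have h1 := wt_mul_Green_le s r F β (p.seq i) (s (p.seq (i + (k + 1))))
    rw [h, p.compat i, nonpos_iff_eq_zero, mul_eq_zero] at h1
    rcases h1 with h1 | h1
    · exact wt_ne_zero _ _ _ h1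
    · refine ih (i + 1) ?_
      rwa [show i + 1 + k = i + (k + 1) by ring]

/-! ### From conformal measures to wandering paths -/

lemma measurable_coord (s r : A → V) (n : ℕ) (T : Set A) :
    MeasurableSet {p : PathSpace s r | p.seq n ∈ T} := by
  let : MeasurableSpace A := ⊤
  exact ⟨(fun x : ℕ → A => x n) ⁻¹' T, measurable_pi_apply n trivial, rfl⟩

/-- The mass of the paths from `v` that sit at `w` at time `n` is controlled by `A(β)ⁿ_{v,w}`. -/
lemma measure_visit_le [Countable A] {s r : A → V} {F : A → ℝ} {β : ℝ}
    {m : Measure (PathSpace s r)} (hm : Conformal s r F β m) (w : V) (n : ℕ) :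
    ∀ v, m (cylV s r v ∩ {p | s (p.seq n) = w}) ≤ Apow s r F β n v w * m (cylV s r w) := by
  induction n with
  | zero =>
    intro v
    by_cases h : w = v
    · subst h
      simpa [Apow, matPow] using measure_mono Set.inter_subset_left
    · have : cylV s r v ∩ {p | s (p.seq 0) = w} = ∅ := by
        ext p
        simp only [cylV, Set.mem_inter_iff, Set.mem_ofPred_eq, Set.mem_empty_iff_false, iff_false]
        rintro ⟨h1, h2⟩
        exact h (h2.symm.trans h1)
      simp [this]
  | succ n ih =>
    intro v
    have hsub : cylV s r v ∩ {p | s (p.seq (n + 1)) = w} ⊆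
        ⋃ a : {a // s a = v}, {p | s (p.seq (n + 1)) = w} ∩ cylA s r a.1 := by
      rintro p ⟨h1, h2⟩
      exact Set.mem_iUnion.2 ⟨⟨p.seq 0, h1⟩, h2, rfl⟩
    refine (measure_mono hsub).trans ((measure_iUnion_le _).trans ?_)
    rw [Apow_succ, ← ENNReal.tsum_mul_right]
    refine ENNReal.tsum_le_tsum fun a => ?_
    have h1 := hm.2.2 a.1 {p | s (p.seq (n + 1)) = w} (measurable_coord s r (n + 1) {a | s a = w})
    have h2 : shift s r '' ({p | s (p.seq (n + 1)) = w} ∩ cylA s r a.1) ⊆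
        cylV s r (r a.1) ∩ {p | s (p.seq n) = w} := by
      rintro _ ⟨p, ⟨h1, h2⟩, rfl⟩
      refine ⟨?_, h1⟩
      have h2 : p.seq 0 = a.1 := h2
      change s (p.seq (0 + 1)) = r a.1
      rw [← p.compat 0, h2]
    calc m ({p | s (p.seq (n + 1)) = w} ∩ cylA s r a.1)
        = wt F β a.1 * m (shift s r '' ({p | s (p.seq (n + 1)) = w} ∩ cylA s r a.1)) := by
          rw [h1, ← mul_assoc, mul_comm (wt F β a.1), exp_mul_wt, one_mul]
      _ ≤ wt F β a.1 * (Apow s r F β n (r a.1) w * m (cylV s r w)) := by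
          gcongr
          exact (measure_mono h2).trans (ih _)
      _ = _ := by rw [mul_assoc]

/-- In the transient case, almost every path is wandering for a conformal measure, by
the Borel–Cantelli lemma. -/
lemma exists_wandering [Countable V] [Countable A] {s r : A → V} {F : A → ℝ} {β : ℝ}
    (htrans : ∀ v w : V, Green s r F β v w ≠ ∞)
    {m : Measure (PathSpace s r)} (hm : Conformal s r F β m) :
    ∃ p : PathSpace s r, Wandering s r p := by
  have key : ∀ᵐ p ∂m, ∀ v w : V, ∀ᶠ n in atTop, p ∉ cylV s r v ∩ {p | s (p.seq n) = w} := by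
    rw [ae_all_iff]
    intro v
    rw [ae_all_iff]
    intro w
    refine ae_eventually_notMem (ne_top_of_le_ne_top ?_
      (ENNReal.tsum_le_tsum fun n => measure_visit_le hm w n v))
    rw [ENNReal.tsum_mul_right]
    exact ENNReal.mul_ne_top (htrans v w) (hm.2.1 w)
  have : (ae m).NeBot := ae_neBot.2 hm.1
  obtain ⟨p, hp⟩ := key.exists
  refine ⟨p, fun F₀ => ?_⟩
  have h : ∀ᶠ n in atTop, ∀ w ∈ F₀, s (p.seq n) ≠ w := by
    rw [Filter.eventually_all_finset]
    intro w _
    filter_upwards [hp (s (p.seq 0)) w] with n hn h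
    exact hn ⟨rfl, h⟩
  obtain ⟨N, hN⟩ := eventually_atTop.1 h
  exact ⟨N, fun i hi hmem => hN i hi _ hmem rfl⟩

/-! ### A harmonic vector from a wandering path -/

/-- Along a wandering path `p` the quotients `G(v, pₖ) / G(p₀, pₖ)` are eventually bounded, and
any limit point of them as `k → ∞` is a harmonic vector. -/
lemma exists_harmonic {s r : A → V} {F : A → ℝ} {β : ℝ}
    (hrow : ∀ v : V, {a : A | s a = v}.Finite)
    (hcofinal : ∀ H : Set V, H.Nonempty → (∀ a : A, s a ∈ H → r a ∈ H) →
      (∀ v : V, (∀ a : A, s a = v → r a ∈ H) → v ∈ H) → H = Set.univ)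
    (htrans : ∀ v w : V, Green s r F β v w ≠ ∞)
    {p : PathSpace s r} (hp : Wandering s r p) :
    ∃ ψ : V → ℝ≥0∞, ψ ≠ 0 ∧ (∀ v, ψ v ≠ ∞) ∧
      ∀ v, ∑' a : {a // s a = v}, wt F β a.1 * ψ (r a.1) = ψ v := by
  have hfin : ∀ v, Finite {a // s a = v} := fun v => (hrow v).to_subtype
  set w : ℕ → V := fun k => s (p.seq k) with hw
  set v₀ := w 0
  set G := Green s r F β with hG
  have hG0 : ∀ k, G v₀ (w k) ≠ 0 := fun k => by
    simpa using Green_path_ne_zero s r F β p k 0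
  have hne : ∀ v, ∀ᶠ k in atTop, w k ≠ v := fun v => by
    obtain ⟨N, hN⟩ := hp {v}
    exact eventually_atTop.2 ⟨N, fun k hk h => hN k hk (by simpa using h)⟩
  -- The vertices at which the quotients are eventually bounded form a nonempty hereditary
  -- saturated set, so cofinality gives boundedness at every vertex.
  have hbdd : {v | ∃ C : ℝ≥0, ∀ᶠ k in atTop, G v (w k) ≤ C * G v₀ (w k)} = Set.univ := by
    apply hcofinal
    · exact ⟨v₀, 1, by simp⟩
    · rintro a ⟨C, hC⟩
      have ht : ENNReal.ofReal (Real.exp (β * F a)) * C ≠ ∞ :=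
        ENNReal.mul_ne_top ENNReal.ofReal_ne_top ENNReal.coe_ne_top
      refine ⟨(ENNReal.ofReal (Real.exp (β * F a)) * C).toNNReal, ?_⟩
      filter_upwards [hC] with k hk
      rw [ENNReal.coe_toNNReal ht, mul_assoc]
      calc G (r a) (w k)
          = ENNReal.ofReal (Real.exp (β * F a)) * (wt F β a * G (r a) (w k)) := by
            rw [← mul_assoc, exp_mul_wt, one_mul]
        _ ≤ _ := mul_le_mul_right ((wt_mul_Green_le s r F β a _).trans hk) _
    · intro v hv
      choose! C hC using hv
      have := Fintype.ofFinite {a // s a = v}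
      have ht : ∑ a : {a // s a = v}, wt F β a.1 * C a.1 ≠ ∞ :=
        ENNReal.sum_ne_top.2 fun a _ => ENNReal.mul_ne_top (wt_ne_top _ _ _) ENNReal.coe_ne_top
      refine ⟨(∑ a : {a // s a = v}, wt F β a.1 * C a.1).toNNReal, ?_⟩
      have hall : ∀ᶠ k in atTop, ∀ a : {a // s a = v}, G (r a.1) (w k) ≤ C a.1 * G v₀ (w k) :=
        Filter.eventually_all.2 fun a => hC a.1 a.2
      filter_upwards [hall, hne v] with k hk hkv
      rw [ENNReal.coe_toNNReal ht, hG, Green_eq_of_ne s r F β hkv, tsum_fintype, Finset.sum_mul]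
      refine Finset.sum_le_sum fun a _ => ?_
      rw [mul_assoc]
      gcongr
      exact hk a
  set K : ℕ → V → ℝ≥0∞ := fun k v => G v (w k) / G v₀ (w k) with hK
  -- Limits are taken along a free ultrafilter; `[0,∞]^V` is compact.
  obtain ⟨ψ, -, hψ⟩ := isCompact_univ.ultrafilter_le_nhds
    ((hyperfilter ℕ).map K) (by simp)
  have hlim : ∀ v, Tendsto (fun k => K k v) (hyperfilter ℕ : Filter ℕ) (𝓝 (ψ v)) := fun v =>
    (tendsto_pi_nhds.1 (show Tendsto K (hyperfilter ℕ : Filter ℕ) (𝓝 ψ) from hψ)) v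
  have hle : (hyperfilter ℕ : Filter ℕ) ≤ atTop := Nat.hyperfilter_le_atTop
  refine ⟨ψ, ?_, ?_, ?_⟩
  · intro h
    have h1 : ∀ k, K k v₀ = 1 := fun k => ENNReal.div_self (hG0 k) (htrans _ _)
    have h2 := hlim v₀
    simp only [h1, h] at h2
    exact one_ne_zero (tendsto_nhds_unique tendsto_const_nhds h2)
  · intro v
    obtain ⟨C, hC⟩ : v ∈ {v | ∃ C : ℝ≥0, ∀ᶠ k in atTop, G v (w k) ≤ C * G v₀ (w k)} := by
      rw [hbdd]; trivial
    refine ne_top_of_le_ne_top (ENNReal.coe_ne_top (r := C)) (le_of_tendsto (hlim v) ?_)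
    filter_upwards [hle hC] with k hk
    exact ENNReal.div_le_of_le_mul hk
  · intro v
    have := Fintype.ofFinite {a // s a = v}
    rw [tsum_fintype]
    have h1 : Tendsto (fun k => ∑ a : {a // s a = v}, wt F β a.1 * K k (r a.1))
        (hyperfilter ℕ : Filter ℕ) (𝓝 (∑ a : {a // s a = v}, wt F β a.1 * ψ (r a.1))) :=
      tendsto_finsetSum _ fun a _ =>
        ENNReal.Tendsto.const_mul (hlim _) (Or.inr (wt_ne_top _ _ _))
    refine tendsto_nhds_unique (h1.congr' ?_) (hlim v)
    filter_upwards [hle (hne v)] with k hk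
    simp only [hK, hG]
    rw [Green_eq_of_ne s r F β hk, tsum_fintype, div_eq_mul_inv, Finset.sum_mul]
    exact Finset.sum_congr rfl fun a _ => by rw [div_eq_mul_inv, mul_assoc]

/-! ### A conformal measure from a harmonic vector -/

/-- The arrows emitted by `v`, with the discrete σ-algebra. -/
def Out (s : A → V) (v : V) : Type := {a // s a = v}

instance (s : A → V) (v : V) : MeasurableSpace (Out s v) := ⊤

instance (s : A → V) (v : V) : DiscreteMeasurableSpace (Out s v) := ⟨fun _ => trivial⟩

/-- The `n`-th vertex of the path from `v` which at time `n` follows the arrow that `ω n`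
selects at the current vertex. -/
def vtx (s r : A → V) (v : V) (ω : ℕ → ∀ u, Out s u) : ℕ → V
  | 0 => v
  | n + 1 => r (ω n (vtx s r v ω n)).1

/-- The path from `v` steered by the selections `ω`. -/
def steer (s r : A → V) (v : V) (ω : ℕ → ∀ u, Out s u) : PathSpace s r where
  seq n := (ω n (vtx s r v ω n)).1
  compat n := (ω (n + 1) (vtx s r v ω (n + 1))).2.symm

/-- Prepending an entry to a sequence. -/
def consSeq {X : Type} (x : X) (y : ℕ → X) : ℕ → X
  | 0 => x
  | n + 1 => y n

lemma vtx_consSeq (s r : A → V) (v : V) (x : ∀ u, Out s u) (ω : ℕ → ∀ u, Out s u) (n : ℕ) :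
    vtx s r v (consSeq x ω) (n + 1) = vtx s r (r (x v).1) ω n := by
  induction n with
  | zero => rfl
  | succ n ih => rw [vtx, ih]; rfl

lemma steer_consSeq (s r : A → V) (v : V) (x : ∀ u, Out s u) (ω : ℕ → ∀ u, Out s u) :
    (steer s r v (consSeq x ω)).seq = consSeq (x v).1 (steer s r (r (x v).1) ω).seq := by
  ext n
  cases n with
  | zero => rfl
  | succ n =>
    change (ω n (vtx s r v (consSeq x ω) (n + 1))).1 = (ω n (vtx s r (r (x v).1) ω n)).1
    rw [vtx_consSeq]

lemma steer_src (s r : A → V) (v : V) (ω : ℕ → ∀ u, Out s u) :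
    s ((steer s r v ω).seq 0) = v := (ω 0 v).2

lemma measurable_steer [Countable V] (s r : A → V) (v : V) : Measurable (steer s r v) := by
  let : MeasurableSpace A := ⊤
  let : MeasurableSpace V := ⊤
  have : DiscreteMeasurableSpace V := ⟨fun _ => trivial⟩
  have hev : ∀ n, Measurable fun q : V × (ℕ → ∀ u, Out s u) => (q.2 n q.1).1 := fun n => by
    refine measurable_from_prod_countable_right fun u => ?_
    exact (Measurable.of_discrete (f := fun a : Out s u => a.1)).comp
      ((measurable_pi_apply u).comp (measurable_pi_apply n))
  have hvtx : ∀ n, Measurable fun ω : ℕ → ∀ u, Out s u => vtx s r v ω n := by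
    intro n
    induction n with
    | zero => exact measurable_const
    | succ n ih =>
      have hr : Measurable r := fun _ _ => trivial
      exact hr.comp ((hev n).comp (ih.prodMk measurable_id))
  rw [measurable_comap_iff]
  exact measurable_pi_iff.2 fun n => (hev n).comp ((hvtx n).prodMk measurable_id)

lemma measurable_consSeq {X : Type} [MeasurableSpace X] :
    Measurable fun q : X × (ℕ → X) => consSeq q.1 q.2 := by
  refine measurable_pi_iff.2 fun n => ?_
  cases n with
  | zero => exact measurable_fst
  | succ n => exact (measurable_pi_apply n).comp measurable_snd

/-- A sequence of independent variables of law `Q` is a variable of law `Q` followed by an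
independent sequence of the same kind. -/
lemma infinitePi_cons {X : Type} [MeasurableSpace X] (Q : Measure X) [IsProbabilityMeasure Q] :
    (Q.prod (Measure.infinitePi fun _ : ℕ => Q)).map (fun q => consSeq q.1 q.2) =
      Measure.infinitePi fun _ : ℕ => Q := by
  classical
  refine Measure.eq_infinitePi _ fun S t ht => ?_
  -- Replacing `t i` by the whole space for `i ∉ S` allows `S` to be enlarged to an initial
  -- segment of `ℕ`.
  obtain ⟨N, hN⟩ : ∃ N, S ⊆ Finset.range (N + 1) := by
    obtain ⟨N, hN⟩ := S.exists_nat_subset_range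
    exact ⟨N, hN.trans (Finset.range_mono (Nat.le_succ N))⟩
  set t' : ℕ → Set X := fun i => if i ∈ S then t i else Set.univ with ht'
  have hmt' : ∀ i, MeasurableSet (t' i) := fun i => by
    simp only [ht']; split_ifs
    exacts [ht i, MeasurableSet.univ]
  have hset : (fun q : X × (ℕ → X) => consSeq q.1 q.2) ⁻¹' (Set.pi S t) =
      t' 0 ×ˢ Set.pi (Finset.range N : Set ℕ) (fun i => t' (i + 1)) := by
    ext ⟨x, y⟩
    simp only [Set.mem_preimage, Set.mem_pi, Set.mem_prod, ht', Finset.mem_coe]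
    constructor
    · intro h
      constructor
      · split_ifs with h0
        exacts [h 0 h0, trivial]
      · intro i _
        split_ifs with h0
        exacts [h (i + 1) h0, trivial]
    · rintro ⟨h0, h1⟩ i hi
      cases i with
      | zero =>
        rw [if_pos hi] at h0
        exact h0
      | succ i =>
        have := h1 i (by have := hN hi; simp at this ⊢; omega)
        rw [if_pos hi] at this
        exact this
  rw [Measure.map_apply measurable_consSeq (.pi S.countable_toSet fun i _ => ht i), hset,
    Measure.prod_prod, Measure.infinitePi_pi _ fun i _ => hmt' _, mul_comm,
    ← Finset.prod_range_succ' (fun i => Q (t' i)) N, ← Finset.prod_subset hN]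
  · exact Finset.prod_congr rfl fun i hi => by simp [ht', hi]
  · intro i _ hi
    simp [ht', hi]

/-- Transition probabilities: the Doob transform of the weights by a harmonic vector. Where `ψ`
vanishes the choice is arbitrary. -/
lemma exists_transition {s r : A → V} {F : A → ℝ} {β : ℝ} (hnosink : ∀ v : V, ∃ a : A, s a = v)
    {ψ : V → ℝ≥0∞} (hψt : ∀ v, ψ v ≠ ∞)
    (hψ : ∀ v, ∑' a : {a // s a = v}, wt F β a.1 * ψ (r a.1) = ψ v) (v : V) :
    ∃ q : PMF (Out s v), ∀ a, ψ v * q a = wt F β a.1 * ψ (r a.1) := by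
  have hsum : ∑' a : Out s v, wt F β a.1 * ψ (r a.1) = ψ v := hψ v
  by_cases h0 : ψ v = 0
  · obtain ⟨b, hb⟩ := hnosink v
    refine ⟨PMF.pure ⟨b, hb⟩, fun a => ?_⟩
    rw [h0, ENNReal.tsum_eq_zero] at hsum
    rw [hsum a, h0, zero_mul]
  · refine ⟨PMF.normalize (fun a : Out s v => wt F β a.1 * ψ (r a.1)) (by rwa [hsum])
      (by rw [hsum]; exact hψt v), fun a => ?_⟩
    rw [PMF.normalize_apply, hsum, mul_comm, mul_assoc, ENNReal.inv_mul_cancel h0 (hψt v), mul_one]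

/-- The measure `∑ ψ(v) P_v`, with `P_v` the law of the path from `v` of the Markov chain given by
the transition probabilities of `exists_transition`, is conformal. -/
lemma exists_conformal [Countable V] {s r : A → V} {F : A → ℝ} {β : ℝ}
    (hnosink : ∀ v : V, ∃ a : A, s a = v)
    {ψ : V → ℝ≥0∞} (hψ0 : ψ ≠ 0) (hψt : ∀ v, ψ v ≠ ∞)
    (hψ : ∀ v, ∑' a : {a // s a = v}, wt F β a.1 * ψ (r a.1) = ψ v) :
    ∃ m : Measure (PathSpace s r), Conformal s r F β m := by
  choose q hq using exists_transition hnosink hψt hψ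
  set Q : Measure (∀ u, Out s u) := Measure.infinitePi fun u => (q u).toMeasure with hQ
  set ν : Measure (ℕ → ∀ u, Out s u) := Measure.infinitePi fun _ : ℕ => Q with hν
  set m : Measure (PathSpace s r) := Measure.sum fun v => ψ v • ν.map (steer s r v) with hm
  -- The starting vertex decides which summand of `m` charges a subset of `Z(u)`.
  have hmass : ∀ u (C : Set (PathSpace s r)), MeasurableSet C → C ⊆ cylV s r u →
      m C = ψ u * ν (steer s r u ⁻¹' C) := by
    intro u C hC hCu
    rw [hm, Measure.sum_apply _ hC, tsum_eq_single u]
    · rw [Measure.smul_apply, Measure.map_apply (measurable_steer s r u) hC, smul_eq_mul]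
    · intro v hv
      have : steer s r v ⁻¹' C = ∅ := by
        ext ω
        simp only [Set.mem_preimage, Set.mem_empty_iff_false, iff_false]
        intro h
        exact hv ((steer_src s r v ω).symm.trans (hCu h))
      rw [Measure.smul_apply, Measure.map_apply (measurable_steer s r v) hC, this]
      simp
  have hcyl : ∀ v, m (cylV s r v) = ψ v := by
    intro v
    have : steer s r v ⁻¹' cylV s r v = Set.univ := by
      ext ω
      exact iff_of_true (steer_src s r v ω) trivial
    rw [hmass v (cylV s r v) (measurable_coord s r 0 {a | s a = v}) subset_rfl, this, measure_univ, mul_one]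
  refine ⟨m, ?_, fun v => by rw [hcyl]; exact hψt v, ?_⟩
  · intro h
    apply hψ0
    ext v
    rw [← hcyl v, h]
    rfl
  · rintro a _ ⟨B, hB, rfl⟩
    let : MeasurableSpace A := ⊤
    set D : Set (PathSpace s r) := {y | s (y.seq 0) = r a} ∩ {y | consSeq a y.seq ∈ B} with hD
    have himg : shift s r '' ((fun p : PathSpace s r => p.seq) ⁻¹' B ∩ cylA s r a) = D := by
      ext y
      constructor
      · rintro ⟨p, ⟨h1, h2⟩, rfl⟩
        have h2 : p.seq 0 = a := h2
        refine ⟨?_, ?_⟩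
        · change s (p.seq (0 + 1)) = r a
          rw [← p.compat 0, h2]
        · have : consSeq a (shift s r p).seq = p.seq := by
            ext n
            cases n with
            | zero => exact h2.symm
            | succ n => rfl
          change consSeq a (shift s r p).seq ∈ B
          rw [this]
          exact h1
      · rintro ⟨h1, h2⟩
        refine ⟨⟨consSeq a y.seq, fun i => ?_⟩, ⟨h2, rfl⟩, rfl⟩
        cases i with
        | zero => exact h1.symm
        | succ i => exact y.compat i
    have hDm : MeasurableSet D := by
      refine (measurable_coord s r 0 {b | s b = r a}).inter ?_
      refine ⟨(fun x => consSeq a x) ⁻¹' B, ?_, rfl⟩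
      exact (measurable_consSeq.comp (measurable_const.prodMk measurable_id)) hB
    have hBm : MeasurableSet ((fun p : PathSpace s r => p.seq) ⁻¹' B ∩ cylA s r a) :=
      MeasurableSet.inter ⟨B, hB, rfl⟩ (measurable_coord s r 0 {a})
    rw [himg, hmass (r a) D hDm Set.inter_subset_left, hmass (s a) _ hBm
      (fun p hp => congrArg s hp.2)]
    set a' : Out s (s a) := ⟨a, rfl⟩
    -- Splitting off the selection at time `0` makes the event a rectangle.
    have hrect : (fun z : (∀ u, Out s u) × (ℕ → ∀ u, Out s u) => consSeq z.1 z.2) ⁻¹'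
        (steer s r (s a) ⁻¹' ((fun p : PathSpace s r => p.seq) ⁻¹' B ∩ cylA s r a)) =
        ((fun x : ∀ u, Out s u => x (s a)) ⁻¹' {a'}) ×ˢ (steer s r (r a) ⁻¹' D) := by
      ext ⟨x, ω⟩
      have hseq := steer_consSeq s r (s a) x ω
      simp only [Set.mem_preimage, Set.mem_inter_iff, Set.mem_prod, Set.mem_singleton_iff, cylA,
        Set.mem_ofPred_eq, hD, hseq]
      have hiff : consSeq (x (s a)).1 (steer s r (r (x (s a)).1) ω).seq 0 = a ↔ x (s a) = a' :=
        ⟨fun h => Subtype.ext h, fun h => by rw [h]; rfl⟩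
      rw [hiff]
      constructor
      · rintro ⟨h1, h2⟩
        rw [h2] at h1
        exact ⟨h2, steer_src s r (r a) ω, h1⟩
      · rintro ⟨h1, -, h2⟩
        refine ⟨?_, h1⟩
        rw [h1]
        exact h2
    have hQa : Q ((fun x : ∀ u, Out s u => x (s a)) ⁻¹' {a'}) = q (s a) a' := by
      rw [← Measure.map_apply (measurable_pi_apply _) (measurableSet_singleton _), hQ,
        Measure.infinitePi_map_eval, PMF.toMeasure_apply_singleton _ _ (measurableSet_singleton _)]
    have hsplit : ν (steer s r (s a) ⁻¹'
        ((fun p : PathSpace s r => p.seq) ⁻¹' B ∩ cylA s r a)) =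
        q (s a) a' * ν (steer s r (r a) ⁻¹' D) := by
      conv_lhs => rw [hν, ← infinitePi_cons Q]
      rw [Measure.map_apply measurable_consSeq (measurable_steer s r _ hBm), hrect,
        Measure.prod_prod, hQa]
    rw [hsplit, ← mul_assoc (ψ (s a)), hq, ← mul_assoc, ← mul_assoc, exp_mul_wt, one_mul]

/-- for a cofinal row-finite graph without sinks in the transient case,
there is an `e^{βF}`-conformal measure on `P(Γ)` iff there is a wandering path. -/
theorem statement17 {V A : Type} [Countable V] [Countable A] (s r : A → V)
    (F : A → ℝ) (β : ℝ)
    (hrow : ∀ v : V, {a : A | s a = v}.Finite)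
    (hnosink : ∀ v : V, ∃ a : A, s a = v)
    (hcofinal : ∀ H : Set V, H.Nonempty → (∀ a : A, s a ∈ H → r a ∈ H) →
      (∀ v : V, (∀ a : A, s a = v → r a ∈ H) → v ∈ H) → H = Set.univ)
    (htrans : ∀ v w : V, Green s r F β v w ≠ ∞) :
    (∃ m : Measure (PathSpace s r), Conformal s r F β m) ↔
      ∃ p : PathSpace s r, Wandering s r p := by
  constructor
  · rintro ⟨m, hm⟩
    exact exists_wandering htrans hm
  · rintro ⟨p, hp⟩
    obtain ⟨ψ, hψ0, hψt, hψ⟩ := exists_harmonic hrow hcofinal htrans hp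
    exact exists_conformal hnosink hψ0 hψt hψ

end GraphKMS
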